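/- Let p be an odd prime, let F be a finite field of characteristic p, and let f = (x^p − x)^2 ∈ F[x]. Then f has exactly p + 1 normal decompositions, i.e. there are exactly p + 1 pairs (g, h) of normal polynomials over F, each of degree at least 2, with f = g ∘ h. -/

import Mathlib

/-!
Write `u = X ^ p - X`, so that the polynomial to decompose is `u ^ 2`, of degree `2 * p`. In a
decomposition `u ^ 2 = g ∘ h` into factors of degree at least `2`, primality of `p` leaves two
cases, `deg h = p` and `deg h = 2`.

* If `deg h = p`, then `g = X ^ 2 + c X`, and completing the square in `u ^ 2 = h ^ 2 + c h` gives
  `(2 h + c - 2 u) (2 h + c + 2 u) = c ^ 2`. If `c ≠ 0`, both factors are constants, hence so is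
  their difference `4 u`, which is absurd. So `c = 0`, and `h = u` as both are monic
  (`eq_of_comp_quadratic`). This gives one decomposition.
* If `deg h = 2`, then `h = X ^ 2 + b X` takes the same value at `-b` as at `0`, so
  `u(-b) ^ 2 = u(0) ^ 2 = 0` and `b` lies in the prime field. Conversely, for `a` in the prime
  field, `u` is invariant under `X ↦ X + a`, and `u ^ 2` is a polynomial in `X ^ 2`, hence also a
  polynomial in `(X + a) ^ 2 - a ^ 2 = X ^ 2 + 2 a X` (`leftFactor_comp_rightFactor`).
  As `b = 2 a` runs through the prime field this gives `p` decompositions, the left factor being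
  determined by the right one.
-/

open Polynomial

section Decompositions

variable {F : Type*} [Field F]

/-- The normal quadratic `X ^ 2 + 2 a X = (X + a) ^ 2 - a ^ 2`. -/
noncomputable def rightFactor (a : F) : F[X] := X ^ 2 + C (2 * a) * X

/-- The left factor belonging to `rightFactor a` in characteristic `p = 2 * m + 1`: the polynomial
`z (z ^ m - 1) ^ 2`, which expresses `(X ^ p - X) ^ 2` through `z = X ^ 2`, shifted by `a ^ 2`. -/
noncomputable def leftFactor (m : ℕ) (a : F) : F[X] :=
  (X * (X ^ m - 1) ^ 2 : F[X]).comp (X + C (a ^ 2))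

lemma natDegree_rightFactor (a : F) : (rightFactor a).natDegree = 2 := by
  unfold rightFactor; compute_degree!

lemma monic_rightFactor (a : F) : (rightFactor a).Monic := by
  unfold rightFactor; monicity!

lemma coeff_zero_rightFactor (a : F) : (rightFactor a).coeff 0 = 0 := by
  simp [rightFactor]

lemma coeff_one_rightFactor (a : F) : (rightFactor a).coeff 1 = 2 * a := by
  simp [rightFactor, coeff_X_pow]

lemma monic_leftFactor {m : ℕ} (hm : m ≠ 0) (a : F) : (leftFactor m a).Monic := by
  unfold leftFactor
  have h : (X ^ m - 1 : F[X]).Monic := by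
    simpa using monic_X_pow_sub_C (1 : F) hm
  refine (monic_X.mul (h.pow 2)).comp (monic_X_add_C _) ?_
  rw [natDegree_X_add_C]; exact one_ne_zero

/-- A normal polynomial of degree two has the form `X ^ 2 + b X`. -/
lemma eq_quadratic {h : F[X]} (hm : h.Monic) (h0 : h.coeff 0 = 0) (hd : h.natDegree = 2) :
    h = X ^ 2 + C (h.coeff 1) * X := by
  have h2 : h.coeff 2 = 1 := hd ▸ hm
  conv_lhs => rw [as_sum_range_C_mul_X_pow h, hd]
  simp [Finset.sum_range_succ, h0, h2]
  ring

/-- Completing the square: if `u ^ 2 = h ^ 2 + c h` for monic `u`, `h` with `u`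
nonconstant and `2` invertible, then `h = u` and `c = 0`. -/
lemma eq_of_comp_quadratic (h2 : (2 : F) ≠ 0) {u h : F[X]} {c : F} (hu : u.Monic)
    (hud : 0 < u.natDegree) (hm : h.Monic) (he : u ^ 2 = h ^ 2 + C c * h) :
    h = u ∧ c = 0 := by
  have hC2 : (C (2 : F) : F[X]) = 2 := rfl
  have key : (2 * h + C c - 2 * u) * (2 * h + C c + 2 * u) = C (c ^ 2) := by
    rw [C_pow]; linear_combination -4 * he
  have hc : c = 0 := by
    by_contra hc
    have hunit : IsUnit (C (c ^ 2)) := isUnit_C.2 (pow_ne_zero 2 hc).isUnit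
    rw [← key] at hunit
    have h1 := natDegree_eq_zero_of_isUnit (isUnit_of_mul_isUnit_left hunit)
    have h3 := natDegree_eq_zero_of_isUnit (isUnit_of_mul_isUnit_right hunit)
    have h4 : C (4 : F) * u = (2 * h + C c + 2 * u) - (2 * h + C c - 2 * u) := by
      rw [show (4 : F) = 2 + 2 by norm_num, C_add, hC2]; ring
    have h5 : (C (4 : F) * u).natDegree = 0 := by
      rw [h4]
      have := natDegree_sub_le (2 * h + C c + 2 * u) (2 * h + C c - 2 * u)
      simp only [h1, h3] at this
      simpa using this
    rw [natDegree_C_mul (by rw [show (4 : F) = 2 * 2 by norm_num]; exact mul_ne_zero h2 h2)] at h5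
    omega
  subst hc
  refine ⟨?_, rfl⟩
  simp only [map_zero, zero_mul, add_zero] at he
  rcases sq_eq_sq_iff_eq_or_eq_neg.1 he with hs | hs
  · exact hs.symm
  · -- comparing leading coefficients in `u = -h` gives `1 = -1`
    exfalso
    have hl := congrArg leadingCoeff hs
    rw [leadingCoeff_neg, hu.leadingCoeff, hm.leadingCoeff] at hl
    exact h2 (by linear_combination hl)

/-- The left component of a decomposition is determined by a nonconstant right component. -/
lemma comp_right_cancel {g₁ g₂ h : F[X]} (hd : 0 < h.natDegree) (he : g₁.comp h = g₂.comp h) :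
    g₁ = g₂ := by
  have h0 : (g₁ - g₂).comp h = 0 := by rw [sub_comp, he, sub_self]
  rcases comp_eq_zero_iff.1 h0 with hs | ⟨-, hs⟩
  · exact sub_eq_zero.1 hs
  · rw [hs, natDegree_C] at hd
    exact absurd hd (lt_irrefl 0)

lemma leftFactor_comp_rightFactor {p m : ℕ} [Fact p.Prime] [CharP F p] (hp : p = 2 * m + 1)
    {a : F} (ha : a ^ p = a) :
    ((X : F[X]) ^ p - X) ^ 2 = (leftFactor m a).comp (rightFactor a) := by
  have hu : (X : F[X]) ^ p - X = (X + C a) ^ p - (X + C a) := by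
    rw [add_pow_char, ← C_pow, ha]; ring
  have hsq : rightFactor a + C (a ^ 2) = (X + C a) ^ 2 := by
    simp only [rightFactor, C_mul, C_pow, map_ofNat]; ring
  have hc : (leftFactor m a).comp (rightFactor a)
      = (X + C a) ^ 2 * (((X + C a) ^ 2) ^ m - 1) ^ 2 := by
    rw [← hsq]; simp [leftFactor]
  rw [hc, hu, hp]
  generalize (X + C a : F[X]) = y
  ring

end Decompositions

/-- **Example.** Let `p` be an odd prime, `F` a finite field of characteristic `p`, and
`f = (x^p − x)² ∈ F[x]`.  Then `f` has exactly `p + 1` normal decompositions: there are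
exactly `p + 1` pairs `(g, h)` of normal polynomials (monic with constant term `0`) over
`F`, each of degree at least `2`, with `f = g ∘ h`. -/
theorem count_normal_decompositions_of_xp_minus_x_squared
    {F : Type*} [Field F] [Fintype F] (p : ℕ) [Fact p.Prime] (hodd : Odd p)
    [CharP F p] :
    {gh : F[X] × F[X] |
      gh.1.Monic ∧ gh.1.coeff 0 = 0 ∧ gh.2.Monic ∧ gh.2.coeff 0 = 0 ∧
      2 ≤ gh.1.natDegree ∧ 2 ≤ gh.2.natDegree ∧
      ((X : F[X]) ^ p - X) ^ 2 = gh.1.comp gh.2}.ncard = p + 1 := by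
  have hp : p.Prime := Fact.out
  obtain ⟨m, hm⟩ := id hodd
  have hp2 := hp.two_le
  have hm0 : m ≠ 0 := by omega
  have h2 : (2 : F) ≠ 0 := Ring.two_ne_zero (by rw [ringChar.eq F p]; omega)
  have hum : ((X : F[X]) ^ p - X).Monic := monic_X_pow_sub (by
    rw [degree_X]; exact_mod_cast (by omega : 1 < p))
  have hud : ((X : F[X]) ^ p - X).natDegree = p := FiniteField.X_pow_card_sub_X_natDegree_eq F
    (by omega)
  have hu0 : ((X : F[X]) ^ p - X).coeff 0 = 0 := by
    simp [coeff_X_pow, hp.ne_zero.symm]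
  have hinj : Function.Injective fun a : F => (leftFactor m a, rightFactor a) := by
    intro a b hab
    have h1 := congrArg (fun q : F[X] × F[X] => q.2.coeff 1) hab
    simp only [coeff_one_rightFactor] at h1
    exact mul_left_cancel₀ h2 h1
  have hset : {gh : F[X] × F[X] |
      gh.1.Monic ∧ gh.1.coeff 0 = 0 ∧ gh.2.Monic ∧ gh.2.coeff 0 = 0 ∧
      2 ≤ gh.1.natDegree ∧ 2 ≤ gh.2.natDegree ∧
      ((X : F[X]) ^ p - X) ^ 2 = gh.1.comp gh.2} =
      insert (X ^ 2, X ^ p - X)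
        ((fun a : F => (leftFactor m a, rightFactor a)) '' ((⊥ : Subfield F) : Set F)) := by
    ext ⟨g, h⟩
    simp only [Set.mem_ofPred_eq, Set.mem_insert_iff, Set.mem_image, SetLike.mem_coe,
      Prod.mk.injEq, Subfield.mem_bot_iff_pow_eq_self F p]
    constructor
    · rintro ⟨hgm, hg0, hhm, hh0, hgd, hhd, he⟩
      have hdeg : 2 * p = g.natDegree * h.natDegree := by
        rw [← natDegree_comp, ← he, natDegree_pow, hud]
      rcases hp.dvd_mul.1 (hdeg ▸ dvd_mul_left p 2) with ⟨k, hk⟩ | ⟨k, hk⟩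
      · -- `h` has degree two
        right
        have hkh : k * h.natDegree = 2 :=
          Nat.eq_of_mul_eq_mul_left hp.pos (by rw [← mul_assoc, ← hk, ← hdeg, mul_comm])
        have hd2 : h.natDegree = 2 :=
          le_antisymm (Nat.le_of_dvd two_pos ⟨k, by rw [← hkh, mul_comm]⟩) hhd
        have hq := eq_quadratic hhm hh0 hd2
        set b := h.coeff 1 with hb
        have hg00 : g.eval 0 = 0 := by rw [← coeff_zero_eq_eval_zero, hg0]
        have hev : h.eval (-b) = 0 := by
          rw [hq]; simp only [eval_add, eval_pow, eval_X, eval_mul, eval_C]; ring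
        have hbp : b ^ p = b := by
          have h1 := congrArg (eval (-b)) he
          rw [eval_comp, hev, hg00] at h1
          simp only [eval_pow, eval_sub, eval_X] at h1
          have h3 := pow_eq_zero_iff two_ne_zero |>.1 h1
          rw [hodd.neg_pow] at h3
          linear_combination -h3
        have hab : (b / 2) ^ p = b / 2 := by
          have h2p : (2 : F) ^ p = 2 := by
            have := add_pow_char (1 : F) 1 (p := p)
            rwa [one_pow, one_add_one_eq_two] at this
          rw [div_pow, hbp, h2p]
        have hr : rightFactor (b / 2) = h := by
          rw [hq, rightFactor, mul_div_cancel₀ _ h2]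
        refine ⟨b / 2, hab, ?_, hr⟩
        refine comp_right_cancel (h := h) (by omega) ?_
        rw [← he, leftFactor_comp_rightFactor hm hab, hr]
      · -- `g` has degree two
        left
        have hkg : g.natDegree * k = 2 :=
          Nat.eq_of_mul_eq_mul_left hp.pos (by rw [mul_left_comm, ← hk, ← hdeg, mul_comm])
        have hd2 : g.natDegree = 2 := le_antisymm (Nat.le_of_dvd two_pos ⟨k, hkg.symm⟩) hgd
        have hq := eq_quadratic hgm hg0 hd2
        rw [hq] at he
        simp only [add_comp, pow_comp, X_comp, mul_comp, C_comp] at he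
        obtain ⟨hh, hc⟩ := eq_of_comp_quadratic h2 hum (by omega) hhm he
        rw [hc] at hq
        exact ⟨by simpa using hq, hh⟩
    · rintro (⟨rfl, rfl⟩ | ⟨a, ha, rfl, rfl⟩)
      · exact ⟨monic_X_pow 2, by simp, hum, hu0, by simp, by omega, by simp⟩
      · have he := leftFactor_comp_rightFactor hm ha
        refine ⟨monic_leftFactor hm0 a, ?_, monic_rightFactor a, coeff_zero_rightFactor a, ?_,
          (natDegree_rightFactor a).ge, he⟩
        · -- evaluate the decomposition at `0`
          have h1 := congrArg (eval 0) he
          rw [eval_comp, ← coeff_zero_eq_eval_zero (rightFactor a), coeff_zero_rightFactor,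
            eval_pow, ← coeff_zero_eq_eval_zero, hu0, ← coeff_zero_eq_eval_zero] at h1
          simpa using h1.symm
        · have h1 := congrArg natDegree he
          rw [natDegree_comp, natDegree_rightFactor, natDegree_pow, hud] at h1
          omega
  rw [hset, Set.ncard_insert_of_notMem, Set.ncard_image_of_injective _ hinj]
  · congr 1
    exact Subfield.card_bot F p
  · -- the right components `X ^ p - X` and `rightFactor a` differ in degree
    rintro ⟨a, -, ha⟩
    have h1 := congrArg (fun q : F[X] × F[X] => q.2.natDegree) ha
    simp only [natDegree_rightFactor, hud] at h1
    omega
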